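/- Let E be a finite-dimensional real inner product space and let G, L be linear subspaces with L⊥ ⊆ G. Then for every linear subspace F of E one has δ(F ∩ L, G ∩ L) ≤ δ(F, G). -/

import Mathlib

/-- The Verdier distance between two linear subspaces `F` and `G` of a real inner
product space: `δ(F, G) = sup { dist(x, G) : x ∈ F, ‖x‖ = 1 }` (equal to `0` when
`F = {0}`, since then the set is empty and `sSup ∅ = 0` in `ℝ`). -/
noncomputable def verdierDist {E : Type*} [NormedAddCommGroup E] [InnerProductSpace ℝ E]
    (F G : Submodule ℝ E) : ℝ :=
  sSup ((fun x => Metric.infDist x (G : Set E)) '' {x : E | x ∈ F ∧ ‖x‖ = 1})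

/-! Since `Lᗮ ≤ G`, the orthogonal projection `P` onto `L` maps `G` into `G ⊓ L`: the difference
`g - P g` lies in `Lᗮ`. As `P` is nonexpansive and fixes `L` pointwise, a point of `L` is as close
to `G ⊓ L` as it is to `G`. -/

open Metric Set
open scoped NNReal

theorem infDist_le_mul_infDist_of_lipschitzWith {α β : Type*} [PseudoMetricSpace α]
    [PseudoMetricSpace β] {K : ℝ≥0} {f : α → β} {s : Set α} {t : Set β} (hf : LipschitzWith K f)
    (hst : MapsTo f s t) (hs : s.Nonempty) (x : α) : infDist (f x) t ≤ K * infDist x s := by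
  have : Nonempty s := hs.to_subtype
  rw [infDist_eq_iInf (s := s), Real.mul_iInf_of_nonneg K.coe_nonneg]
  exact le_ciInf fun y => (infDist_le_dist_of_mem (hst y.2)).trans (hf.dist_le_mul x y)

section OrthogonalProjection

variable {𝕜 E : Type*} [RCLike 𝕜] [NormedAddCommGroup E] [InnerProductSpace 𝕜 E]
  {G L : Submodule 𝕜 E} [L.HasOrthogonalProjection]

theorem mapsTo_starProjection_of_orthogonal_le (hLG : Lᗮ ≤ G) :
    MapsTo L.starProjection G G := fun g hg =>
  (G.sub_mem_iff_right hg).1 (hLG (L.sub_starProjection_mem_orthogonal g))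

theorem infDist_inf_eq_of_mapsTo_starProjection (hG : MapsTo L.starProjection G G) {x : E}
    (hx : x ∈ L) : infDist x ((G ⊓ L : Submodule 𝕜 E) : Set E) = infDist x G := by
  refine le_antisymm ?_ (infDist_le_infDist_of_subset inf_le_left (G ⊓ L).nonempty)
  have hGL : MapsTo L.starProjection G (G ⊓ L : Submodule 𝕜 E) := fun g hg =>
    ⟨hG hg, L.starProjection_apply_mem g⟩
  have hPx : L.starProjection x = x := Submodule.starProjection_eq_self_iff.2 hx
  simpa only [hPx, NNReal.coe_one, one_mul] using
    infDist_le_mul_infDist_of_lipschitzWith L.lipschitzWith_starProjection hGL G.nonempty x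

end OrthogonalProjection

section VerdierDist

variable {E : Type*} [NormedAddCommGroup E] [InnerProductSpace ℝ E] {F F' G L : Submodule ℝ E}

theorem verdierDist_nonneg (F G : Submodule ℝ E) : 0 ≤ verdierDist F G :=
  Real.sSup_nonneg (forall_mem_image.2 fun _ _ => infDist_nonneg)

theorem verdierDist_le {r : ℝ} (hr : 0 ≤ r) (h : ∀ x ∈ F, ‖x‖ = 1 → infDist x G ≤ r) :
    verdierDist F G ≤ r :=
  Real.sSup_le (forall_mem_image.2 fun x hx => h x hx.1 hx.2) hr

theorem infDist_le_verdierDist {x : E} (hxF : x ∈ F) (hx : ‖x‖ = 1) :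
    infDist x G ≤ verdierDist F G := by
  refine le_csSup ⟨1, forall_mem_image.2 fun y hy => ?_⟩ (mem_image_of_mem _ ⟨hxF, hx⟩)
  calc infDist y G ≤ dist y 0 := infDist_le_dist_of_mem G.zero_mem
    _ = 1 := by rw [dist_zero_right, hy.2]

theorem verdierDist_mono_left (hF : F ≤ F') : verdierDist F G ≤ verdierDist F' G :=
  verdierDist_le (verdierDist_nonneg F' G) fun _ hxF hx => infDist_le_verdierDist (hF hxF) hx

theorem verdierDist_inf_right_eq_of_le [L.HasOrthogonalProjection]
    (hG : MapsTo L.starProjection G G) (hF : F ≤ L) :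
    verdierDist F (G ⊓ L) = verdierDist F G :=
  congrArg sSup <| image_congr fun _ hx => infDist_inf_eq_of_mapsTo_starProjection hG (hF hx.1)

theorem verdierDist_inf_le_of_orthogonal_le_general [L.HasOrthogonalProjection]
    (hG : MapsTo L.starProjection G G) (F : Submodule ℝ E) :
    verdierDist (F ⊓ L) (G ⊓ L) ≤ verdierDist F G :=
  calc verdierDist (F ⊓ L) (G ⊓ L) = verdierDist (F ⊓ L) G :=
        verdierDist_inf_right_eq_of_le hG inf_le_right
    _ ≤ verdierDist F G := verdierDist_mono_left inf_le_left

end VerdierDist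

/-- If `L⊥ ⊆ G`, then for every subspace `F` one has `δ(F ∩ L, G ∩ L) ≤ δ(F, G)`. -/
theorem verdierDist_inf_le_of_orthogonal_le
    {E : Type*} [NormedAddCommGroup E] [InnerProductSpace ℝ E] [FiniteDimensional ℝ E]
    (G L : Submodule ℝ E) (hLG : Lᗮ ≤ G) :
    ∀ F : Submodule ℝ E, verdierDist (F ⊓ L) (G ⊓ L) ≤ verdierDist F G :=
  verdierDist_inf_le_of_orthogonal_le_general (mapsTo_starProjection_of_orthogonal_le hLG)
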